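/- For every u in the Schwartz space 𝒮(ℝ, ℂ⁴) and every λ ≥ 1, one has ‖u''‖² ≤ ‖Qu‖² + 2C_g⁴‖u‖²; in particular there is a constant d > 0 depending only on C_g, and uniform in λ, with ‖D²u‖² ≤ d(‖Qu‖² + ‖u‖²). -/

import Mathlib

noncomputable section

open MeasureTheory

abbrev V4 : Type := EuclideanSpace ℂ (Fin 4)

/-- A `4 × 4` complex matrix acting on `ℂ⁴` as a continuous linear map. -/
def Mop (A : Matrix (Fin 4) (Fin 4) ℂ) : V4 →L[ℂ] V4 := Matrix.toEuclideanCLM (𝕜 := ℂ) A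

/-- The `L²` inner product `⟨u, v⟩ = ∫ ⟨u(x), v(x)⟩ dx` (conjugate-linear in the first slot). -/
def L2inner (u v : ℝ → V4) : ℂ := ∫ x : ℝ, (inner ℂ (u x) (v x) : ℂ)

/-- The `L²` norm `‖u‖ = (∫ ‖u(x)‖² dx)^{1/2}`. -/
def L2norm (u : ℝ → V4) : ℝ := Real.sqrt (∫ x : ℝ, ‖u x‖ ^ 2)

/-- The operator `D = −i d/dx`. -/
def Dop (u : ℝ → V4) : ℝ → V4 := fun x => (-Complex.I) • deriv u x

/-- The per-mode free Dirac Hamiltonian `H₀u = Γ¹Du + λgΓ²u + fu`. -/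
def H0op (Γ1 Γ2 : Matrix (Fin 4) (Fin 4) ℂ) (g f : ℝ → ℝ) (lam : ℝ) (u : ℝ → V4) : ℝ → V4 :=
  fun x => Mop Γ1 (Dop u x) + (lam * g x) • Mop Γ2 (u x) + f x • u x

/-- The operator `Qu = −u'' + λ²g²u`. -/
def Qop (g : ℝ → ℝ) (lam : ℝ) (u : ℝ → V4) : ℝ → V4 :=
  fun x => -(deriv (deriv u) x) + (lam ^ 2 * g x ^ 2) • u x

/-- The comparison operator `Nu = Qu + (1 + x²)u`. -/
def Nop (g : ℝ → ℝ) (lam : ℝ) (u : ℝ → V4) : ℝ → V4 :=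
  fun x => Qop g lam u x + (1 + x ^ 2) • u x

/-!
Integrating by parts once, the cross term `-2⟪u'', V u⟫` of `‖-u'' + V u‖²` becomes
`2 ∫ (V ‖u'‖² + V' ⟪u', u⟫)`. When `0 ≤ V` and `|V'| ≤ 2 C V`, completing the square in `‖u'‖`
bounds it below by `-2 C² ∫ V ‖u‖²`, and this is absorbed by half of `‖V u‖²` up to `2 C⁴ ‖u‖²`.
The condition `|V'| ≤ 2 C V` is invariant under scaling of `V`, so for `V = λ² g²` the constants
do not see `λ`.
-/

open scoped RealInnerProductSpace

section SquareIntegrable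

variable {α E : Type*} {m : MeasurableSpace α} {μ : Measure α} [NormedAddCommGroup E]

theorem memLp_top_of_nonneg_of_le {V : α → ℝ} {B : ℝ} (hV : AEStronglyMeasurable V μ)
    (hV0 : ∀ᵐ x ∂μ, 0 ≤ V x) (hVB : ∀ᵐ x ∂μ, V x ≤ B) : MemLp V ⊤ μ := by
  refine memLp_top_of_bound hV B ?_
  filter_upwards [hV0, hVB] with x nonneg le
  rwa [Real.norm_of_nonneg nonneg]

theorem integrable_inner_of_memLp {𝕜 : Type*} [RCLike 𝕜] [InnerProductSpace 𝕜 E] {f h : α → E}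
    (hf : MemLp f 2 μ) (hh : MemLp h 2 μ) : Integrable (fun x => inner 𝕜 (f x) (h x)) μ :=
  (hf.norm.integrable_mul hh.norm).mono' (hf.1.inner hh.1) <| .of_forall fun _ =>
    norm_inner_le_norm _ _

variable [InnerProductSpace ℝ E] {V : α → ℝ} {f h u : α → E}

theorem integral_norm_sub_sq (hf : MemLp f 2 μ) (hh : MemLp h 2 μ) :
    ∫ x, ‖f x - h x‖ ^ 2 ∂μ =
      ∫ x, ‖f x‖ ^ 2 ∂μ - 2 * ∫ x, ⟪f x, h x⟫ ∂μ + ∫ x, ‖h x‖ ^ 2 ∂μ := by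
  have f_sq := hf.integrable_norm_pow two_ne_zero
  have h_sq := hh.integrable_norm_pow two_ne_zero
  have cross : Integrable (fun x => 2 * ⟪f x, h x⟫) μ :=
    (integrable_inner_of_memLp hf hh).const_mul 2
  simp only [norm_sub_sq_real]
  rw [integral_add (f := fun x => ‖f x‖ ^ 2 - 2 * ⟪f x, h x⟫) (f_sq.sub cross) h_sq,
    integral_sub f_sq cross, integral_const_mul]

theorem integrable_mul_norm_sq (hVu : MemLp (V • u) 2 μ) (hu : MemLp u 2 μ) :
    Integrable (fun x => V x * ‖u x‖ ^ 2) μ := by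
  simpa only [Pi.smul_apply', real_inner_smul_left, real_inner_self_eq_norm_sq]
    using integrable_inner_of_memLp (𝕜 := ℝ) hVu hu

theorem two_mul_integral_mul_norm_sq_le (hVu : MemLp (V • u) 2 μ) (hu : MemLp u 2 μ) (c : ℝ) :
    2 * (c * ∫ x, V x * ‖u x‖ ^ 2 ∂μ) ≤
      1 / 2 * ∫ x, ‖V x • u x‖ ^ 2 ∂μ + 2 * c ^ 2 * ∫ x, ‖u x‖ ^ 2 ∂μ := by
  have Vu_sq : Integrable (fun x => 1 / 2 * ‖V x • u x‖ ^ 2) μ :=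
    (hVu.integrable_norm_pow two_ne_zero).const_mul _
  have u_sq : Integrable (fun x => 2 * c ^ 2 * ‖u x‖ ^ 2) μ :=
    (hu.integrable_norm_pow two_ne_zero).const_mul _
  have young x : 2 * c * (V x * ‖u x‖ ^ 2) ≤
      1 / 2 * ‖V x • u x‖ ^ 2 + 2 * c ^ 2 * ‖u x‖ ^ 2 := by
    rw [norm_smul, mul_pow, Real.norm_eq_abs, sq_abs]
    linarith [mul_nonneg (sq_nonneg (V x - 2 * c)) (sq_nonneg ‖u x‖)]
  calc 2 * (c * ∫ x, V x * ‖u x‖ ^ 2 ∂μ) = ∫ x, 2 * c * (V x * ‖u x‖ ^ 2) ∂μ := by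
        rw [integral_const_mul, mul_assoc]
    _ ≤ ∫ x, 1 / 2 * ‖V x • u x‖ ^ 2 + 2 * c ^ 2 * ‖u x‖ ^ 2 ∂μ :=
        integral_mono ((integrable_mul_norm_sq hVu hu).const_mul _) (Vu_sq.add u_sq) young
    _ = 1 / 2 * ∫ x, ‖V x • u x‖ ^ 2 ∂μ + 2 * c ^ 2 * ∫ x, ‖u x‖ ^ 2 ∂μ := by
        rw [integral_add Vu_sq u_sq, integral_const_mul, integral_const_mul]

end SquareIntegrable

section SecondDerivative

variable {E : Type*} [NormedAddCommGroup E] [InnerProductSpace ℝ E]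

theorem integral_inner_deriv_left_eq_neg_right {v w : ℝ → E}
    (hv : Differentiable ℝ v) (hw : Differentiable ℝ w)
    (hv_mem : MemLp v 2) (hw_mem : MemLp w 2)
    (hv'_mem : MemLp (deriv v) 2) (hw'_mem : MemLp (deriv w) 2) :
    ∫ x, ⟪deriv v x, w x⟫ = -∫ x, ⟪v x, deriv w x⟫ := by
  rw [eq_comm, neg_eq_iff_eq_neg]
  exact integral_bilinear_hasDerivAt_right_eq_neg_left_of_integrable (L := innerSL ℝ)
    (fun x _ => (hv x).hasDerivAt) (fun x _ => (hw x).hasDerivAt)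
    (integrable_inner_of_memLp hv_mem hw'_mem) (integrable_inner_of_memLp hv'_mem hw_mem)
    (integrable_inner_of_memLp hv_mem hw_mem)

theorem neg_inner_smul_add_smul_le {a b C : ℝ} (ha : 0 ≤ a) (hb : |b| ≤ 2 * C * a) (v w : E) :
    -⟪v, a • v + b • w⟫ ≤ C ^ 2 * (a * ‖w‖ ^ 2) := by
  have cross : -(b * ⟪v, w⟫) ≤ 2 * C * a * (‖v‖ * ‖w‖) := calc
    -(b * ⟪v, w⟫) ≤ |b| * |⟪v, w⟫| := by rw [← abs_mul]; exact neg_le_abs _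
    _ ≤ 2 * C * a * (‖v‖ * ‖w‖) :=
      mul_le_mul hb (abs_real_inner_le_norm v w) (abs_nonneg _) ((abs_nonneg b).trans hb)
  have square : 0 ≤ a * (‖v‖ - C * ‖w‖) ^ 2 := by positivity
  rw [inner_add_right, real_inner_smul_right, real_inner_smul_right, real_inner_self_eq_norm_sq]
  linarith

/-- The one-dimensional Schrödinger operator `-d²/dx² + V`, for vector-valued functions. It is
the operator `Q` when `V = λ² g²`. -/
def schrodingerOp (V : ℝ → ℝ) (u : ℝ → E) : ℝ → E :=
  fun x => -(deriv (deriv u) x) + V x • u x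

/-- A classical form of membership in the Sobolev space `H²(ℝ; E)`: the derivatives exist at every
point, and not just weakly. It is the class of functions on which the estimates are proved. -/
structure IsClassicalH2 (u : ℝ → E) : Prop where
  differentiable : Differentiable ℝ u
  differentiable_deriv : Differentiable ℝ (deriv u)
  memLp : MemLp u 2
  memLp_deriv : MemLp (deriv u) 2
  memLp_deriv_deriv : MemLp (deriv (deriv u)) 2

theorem IsClassicalH2.of_schwartzMap (u : SchwartzMap ℝ E) : IsClassicalH2 u :=
  let u' := SchwartzMap.derivCLM ℝ E u
  { differentiable := u.differentiable
    differentiable_deriv := u'.differentiable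
    memLp := u.memLp 2
    memLp_deriv := u'.memLp 2 volume
    memLp_deriv_deriv := (SchwartzMap.derivCLM ℝ E u').memLp 2 volume }

variable {V : ℝ → ℝ} {B C : ℝ} {u : ℝ → E}

theorem integral_inner_deriv_deriv_smul_le (hu : IsClassicalH2 u) (hV : Differentiable ℝ V)
    (hV0 : ∀ x, 0 ≤ V x) (hVB : ∀ x, V x ≤ B) (hV' : ∀ x, |deriv V x| ≤ 2 * C * V x) :
    ∫ x, ⟪deriv (deriv u) x, V x • u x⟫ ≤ C ^ 2 * ∫ x, V x * ‖u x‖ ^ 2 := by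
  have V'_abs_le x : |deriv V x| ≤ 2 * |C| * B := calc
    |deriv V x| ≤ 2 * C * V x := hV' x
    _ ≤ 2 * |C| * B := by have := hV0 x; have := hVB x; gcongr; exact le_abs_self C
  have deriv_Vu : deriv (V • u) = V • deriv u + deriv V • u :=
    funext fun x => deriv_smul (hV x) (hu.differentiable x)
  have V_top : MemLp V ⊤ := memLp_top_of_nonneg_of_le hV.continuous.aestronglyMeasurable
    (.of_forall hV0) (.of_forall hVB)
  have V'_top : MemLp (deriv V) ⊤ :=
    memLp_top_of_bound (measurable_deriv V).aestronglyMeasurable _ (.of_forall V'_abs_le)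
  have Vu : MemLp (V • u) 2 := hu.memLp.smul V_top
  have Vu_deriv : MemLp (V • deriv u + deriv V • u) 2 :=
    (hu.memLp_deriv.smul V_top).add (hu.memLp.smul V'_top)
  calc ∫ x, ⟪deriv (deriv u) x, V x • u x⟫
      = -∫ x, ⟪deriv u x, deriv (V • u) x⟫ :=
        integral_inner_deriv_left_eq_neg_right hu.differentiable_deriv
          (hV.smul hu.differentiable) hu.memLp_deriv Vu hu.memLp_deriv_deriv (deriv_Vu ▸ Vu_deriv)
    _ = ∫ x, -⟪deriv u x, V x • deriv u x + deriv V x • u x⟫ := by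
        rw [deriv_Vu, ← integral_neg]; rfl
    _ ≤ ∫ x, C ^ 2 * (V x * ‖u x‖ ^ 2) :=
        integral_mono (integrable_inner_of_memLp hu.memLp_deriv Vu_deriv).neg
          ((integrable_mul_norm_sq Vu hu.memLp).const_mul _)
          fun x => neg_inner_smul_add_smul_le (hV0 x) (hV' x) _ _
    _ = C ^ 2 * ∫ x, V x * ‖u x‖ ^ 2 := integral_const_mul _ _

theorem integral_norm_deriv_deriv_sq_add_le (hu : IsClassicalH2 u) (hV : Differentiable ℝ V)
    (hV0 : ∀ x, 0 ≤ V x) (hVB : ∀ x, V x ≤ B) (hV' : ∀ x, |deriv V x| ≤ 2 * C * V x) :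
    (∫ x, ‖deriv (deriv u) x‖ ^ 2) + 1 / 2 * ∫ x, ‖V x • u x‖ ^ 2 ≤
      (∫ x, ‖schrodingerOp V u x‖ ^ 2) + 2 * C ^ 4 * ∫ x, ‖u x‖ ^ 2 := by
  have Vu : MemLp (V • u) 2 := hu.memLp.smul <|
    memLp_top_of_nonneg_of_le hV.continuous.aestronglyMeasurable (.of_forall hV0) (.of_forall hVB)
  have expansion : ∫ x, ‖schrodingerOp V u x‖ ^ 2 = (∫ x, ‖deriv (deriv u) x‖ ^ 2) -
      2 * (∫ x, ⟪deriv (deriv u) x, V x • u x⟫) + ∫ x, ‖V x • u x‖ ^ 2 := by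
    simp only [schrodingerOp, neg_add_eq_sub, norm_sub_rev (V _ • u _)]
    exact integral_norm_sub_sq hu.memLp_deriv_deriv Vu
  have commutator := integral_inner_deriv_deriv_smul_le hu hV hV0 hVB hV'
  have absorption := two_mul_integral_mul_norm_sq_le Vu hu.memLp (C ^ 2)
  rw [expansion]
  linarith

theorem second_derivative_estimate_general (hu : IsClassicalH2 u) (hV : Differentiable ℝ V)
    (hV0 : ∀ x, 0 ≤ V x) (hVB : ∀ x, V x ≤ B) (hV' : ∀ x, |deriv V x| ≤ 2 * C * V x) :
    (∫ x, ‖deriv (deriv u) x‖ ^ 2) ≤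
        (∫ x, ‖schrodingerOp V u x‖ ^ 2) + 2 * C ^ 4 * ∫ x, ‖u x‖ ^ 2 ∧
      (∫ x, ‖deriv (deriv u) x‖ ^ 2) ≤
        (1 + 2 * C ^ 4) * ((∫ x, ‖schrodingerOp V u x‖ ^ 2) + ∫ x, ‖u x‖ ^ 2) := by
  have estimate := integral_norm_deriv_deriv_sq_add_le hu hV hV0 hVB hV'
  have Vu_sq_nonneg : 0 ≤ ∫ x, ‖V x • u x‖ ^ 2 := integral_nonneg fun x => by positivity
  have u_sq_nonneg : 0 ≤ ∫ x, ‖u x‖ ^ 2 := integral_nonneg fun x => by positivity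
  have Qu_sq_nonneg : 0 ≤ 2 * C ^ 4 * ∫ x, ‖schrodingerOp V u x‖ ^ 2 :=
    mul_nonneg (by positivity) (integral_nonneg fun x => by positivity)
  constructor <;> linarith

end SecondDerivative

theorem L2norm_sq (u : ℝ → V4) : L2norm u ^ 2 = ∫ x, ‖u x‖ ^ 2 :=
  Real.sq_sqrt (integral_nonneg fun _ => by positivity)

theorem norm_Dop_Dop (u : ℝ → V4) (x : ℝ) : ‖Dop (Dop u) x‖ = ‖deriv (deriv u) x‖ := by
  unfold Dop
  simp only [deriv_fun_const_smul_field, norm_smul, norm_neg, Complex.norm_I, one_mul]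

theorem abs_deriv_mul_sq_le {g : ℝ → ℝ} {x c C : ℝ} (hc : 0 ≤ c) (hg : DifferentiableAt ℝ g x)
    (hg' : |deriv g x| ≤ C * |g x|) :
    |deriv (fun y => c * g y ^ 2) x| ≤ 2 * C * (c * g x ^ 2) := by
  have deriv_eq : deriv (fun y => c * g y ^ 2) x = 2 * c * (g x * deriv g x) := by
    rw [((hg.hasDerivAt.fun_pow 2).const_mul c).deriv]
    ring
  calc |deriv (fun y => c * g y ^ 2) x| = 2 * c * (|g x| * |deriv g x|) := by
        rw [deriv_eq, abs_mul, abs_mul (g x), abs_of_nonneg (by positivity)]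
    _ ≤ 2 * c * (|g x| * (C * |g x|)) := by gcongr
    _ = 2 * C * (c * g x ^ 2) := by rw [← sq_abs (g x)]; ring

/-- second-derivative estimate: for every Schwartz `u` and `λ ≥ 1`,
`‖u''‖² ≤ ‖Qu‖² + 2C_g⁴‖u‖²`; in particular there is `d > 0` depending only on `C_g`,
uniform in `λ`, with `‖D²u‖² ≤ d(‖Qu‖² + ‖u‖²)`. -/
theorem second_derivative_estimate
    (g : ℝ → ℝ) (hg_smooth : ContDiff ℝ (⊤ : ℕ∞) g) (Cb : ℝ) (hg_bdd : ∀ x : ℝ, |g x| ≤ Cb)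
    (Cg : ℝ) (hCg : 0 < Cg) (hg' : ∀ x : ℝ, |deriv g x| ≤ Cg * |g x|) :
    (∀ (u : SchwartzMap ℝ V4) (lam : ℝ), 1 ≤ lam →
      L2norm (fun x => deriv (deriv ⇑u) x) ^ 2 ≤
        L2norm (Qop g lam ⇑u) ^ 2 + 2 * Cg ^ 4 * L2norm ⇑u ^ 2) ∧
    ∃ d : ℝ, 0 < d ∧ ∀ (u : SchwartzMap ℝ V4) (lam : ℝ), 1 ≤ lam →
      L2norm (fun x => Dop (Dop ⇑u) x) ^ 2 ≤
        d * (L2norm (Qop g lam ⇑u) ^ 2 + L2norm ⇑u ^ 2) := by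
  have hg : Differentiable ℝ g := hg_smooth.differentiable (by simp)
  have estimate (u : SchwartzMap ℝ V4) (lam : ℝ) :=
    second_derivative_estimate_general (V := fun x => lam ^ 2 * g x ^ 2) (B := lam ^ 2 * Cb ^ 2)
      (.of_schwartzMap u) (by fun_prop) (fun x => by positivity)
      (fun x => mul_le_mul_of_nonneg_left (sq_le_sq.2 ((hg_bdd x).trans (le_abs_self Cb)))
        (sq_nonneg lam))
      (fun x => abs_deriv_mul_sq_le (sq_nonneg lam) (hg x) (hg' x))
  simp only [L2norm_sq, norm_Dop_Dop]
  exact ⟨fun u lam _ => (estimate u lam).1, 1 + 2 * Cg ^ 4, by positivity,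
    fun u lam _ => (estimate u lam).2⟩
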